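/- Assume the coercivity property: there exists ν > 0 such that B(f) ≥ ν ‖f‖²_{H¹} for every f ∈ K. Then there exist positive constants ν₁, ν₂ > 0 such that for EVERY H¹ function f = f₁ + i f₂ one has B(f) ≥ ν₁ ‖f‖²_{H¹} − ν₂ ( (∫ Q f₁ dx)² + Σ_{j=1}^d (∫ x_j Q f₁ dx)² + (∫ |x|² Q f₁ dx)² + Σ_{j=1}^d (∫ ∂_{x_j}Q f₂ dx)² + (∫ ΛQ f₂ dx)² + (∫ ρ f₂ dx)² ). -/

import Mathlib

noncomputable section

open MeasureTheory

/-- Partial derivative of a real-valued function on `ℝ^d` in the `i`-th coordinate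
direction. -/
def pd {d : ℕ} (f : EuclideanSpace ℝ (Fin d) → ℝ) (i : Fin d)
    (x : EuclideanSpace ℝ (Fin d)) : ℝ :=
  fderiv ℝ f x (EuclideanSpace.single i 1)

/-- Laplacian of a real-valued function on `ℝ^d`. -/
def lap {d : ℕ} (f : EuclideanSpace ℝ (Fin d) → ℝ)
    (x : EuclideanSpace ℝ (Fin d)) : ℝ :=
  ∑ i, pd (pd f i) i x

/-- The complex-valued function `f = f₁ + i f₂` is an `H¹` function: `f₁, f₂` are
continuously differentiable, and `f` and `∇f` are square integrable. -/
def IsH1 {d : ℕ} (f₁ f₂ : EuclideanSpace ℝ (Fin d) → ℝ) : Prop :=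
  ContDiff ℝ 1 f₁ ∧ ContDiff ℝ 1 f₂ ∧
  Integrable (fun x : EuclideanSpace ℝ (Fin d) => f₁ x ^ 2 + f₂ x ^ 2) ∧
  Integrable (fun x : EuclideanSpace ℝ (Fin d) =>
    ∑ i, (pd f₁ i x ^ 2 + pd f₂ i x ^ 2))

/-- The squared `H¹` norm `∫ |f|² + |∇f|²` of `f = f₁ + i f₂`. -/
def H1normSq {d : ℕ} (f₁ f₂ : EuclideanSpace ℝ (Fin d) → ℝ) : ℝ :=
  (∫ x : EuclideanSpace ℝ (Fin d), (f₁ x ^ 2 + f₂ x ^ 2))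
    + ∫ x : EuclideanSpace ℝ (Fin d), ∑ i, (pd f₁ i x ^ 2 + pd f₂ i x ^ 2)

/-- The quadratic form `B(f) = ⟨L₊f₁, f₁⟩ + ⟨L₋f₂, f₂⟩` associated to the linearized
operators around the ground state `Q`. -/
def Bform {d : ℕ} (Q f₁ f₂ : EuclideanSpace ℝ (Fin d) → ℝ) : ℝ :=
  (∫ x : EuclideanSpace ℝ (Fin d),
      ((∑ i, pd f₁ i x ^ 2) + f₁ x ^ 2
        - (1 + 4 / (d : ℝ)) * Q x ^ ((4 : ℝ) / d) * f₁ x ^ 2))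
    + ∫ x : EuclideanSpace ℝ (Fin d),
        ((∑ i, pd f₂ i x ^ 2) + f₂ x ^ 2 - Q x ^ ((4 : ℝ) / d) * f₂ x ^ 2)

/-- Membership in the set `K` of `H¹` functions `f = f₁ + i f₂` satisfying the
orthogonality conditions. -/
def InKset {d : ℕ} (Q ρ f₁ f₂ : EuclideanSpace ℝ (Fin d) → ℝ) : Prop :=
  (∫ x : EuclideanSpace ℝ (Fin d), Q x * f₁ x) = 0 ∧
  (∀ j, (∫ x : EuclideanSpace ℝ (Fin d), x j * Q x * f₁ x) = 0) ∧
  (∫ x : EuclideanSpace ℝ (Fin d), ‖x‖ ^ 2 * Q x * f₁ x) = 0 ∧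
  (∀ j, (∫ x : EuclideanSpace ℝ (Fin d), pd Q j x * f₂ x) = 0) ∧
  (∫ x : EuclideanSpace ℝ (Fin d),
      ((d : ℝ) / 2 * Q x + ∑ i, x i * pd Q i x) * f₂ x) = 0 ∧
  (∫ x : EuclideanSpace ℝ (Fin d), ρ x * f₂ x) = 0

theorem aux_abstract {V ι : Type*} [AddCommGroup V] [Module ℝ V] [Fintype ι] [DecidableEq ι]
    (N B : V → ℝ) (hN0 : ∀ a, 0 ≤ N a) (hNadd : ∀ a b, N (a + b) ≤ 2 * N a + 2 * N b)
    (hNsmul : ∀ (c : ℝ) a, N (c • a) = c ^ 2 * N a)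
    (hB : ∀ ε > 0, ∃ C ≥ (0 : ℝ), ∀ g h, B g - ε * N g - C * N h ≤ B (g + h))
    (L : V →ₗ[ℝ] (ι → ℝ)) (ν : ℝ) (hν : 0 < ν)
    (hco : ∀ f, L f = 0 → ν * N f ≤ B f) :
    ∃ ν₁ > (0 : ℝ), ∃ ν₂ > (0 : ℝ), ∀ f, ν₁ * N f - ν₂ * ∑ k, L f k ^ 2 ≤ B f := by
  have hN00 : N 0 = 0 := by simpa using hNsmul 0 0
  obtain ⟨S, hS⟩ : ∃ S : (ι → ℝ) →ₗ[ℝ] V, ∀ f, L (S (L f)) = L f := by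
    obtain ⟨T, hT⟩ := LinearMap.exists_rightInverse_of_surjective L.rangeRestrict
      (LinearMap.range_rangeRestrict L)
    obtain ⟨S, hS⟩ := LinearMap.exists_extend T
    refine ⟨S, fun f => ?_⟩
    have h1 : S (L f) = T (L.rangeRestrict f) := by
      rw [← hS]; rfl
    have h2 := LinearMap.congr_fun hT (L.rangeRestrict f)
    rw [h1]
    exact congrArg Subtype.val h2
  obtain ⟨D, hD0, hD⟩ : ∃ D ≥ (0 : ℝ), ∀ y : ι → ℝ, N (S y) ≤ D * ∑ k, y k ^ 2 := by
    have key : ∀ s : Finset ι, ∃ D ≥ (0 : ℝ), ∀ y : ι → ℝ,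
        N (∑ k ∈ s, y k • S (Pi.single k 1)) ≤ D * ∑ k ∈ s, y k ^ 2 := by
      intro s
      induction s using Finset.induction_on with
      | empty => exact ⟨0, le_refl _, fun y => by simp [hN00]⟩
      | insert a s ha ih =>
        obtain ⟨D, hD0, hD⟩ := ih
        refine ⟨2 * N (S (Pi.single a 1)) + 2 * D, by have := hN0 (S (Pi.single a 1)); positivity,
          fun y => ?_⟩
        rw [Finset.sum_insert ha, Finset.sum_insert ha]
        have h1 := hNadd (y a • S (Pi.single a 1)) (∑ k ∈ s, y k • S (Pi.single k 1))
        rw [hNsmul] at h1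
        have h2 := hD y
        have h3 : 0 ≤ ∑ k ∈ s, y k ^ 2 := Finset.sum_nonneg fun _ _ => sq_nonneg _
        have h4 := mul_nonneg (hN0 (S (Pi.single a 1))) h3
        have h5 := mul_nonneg hD0 (sq_nonneg (y a))
        nlinarith
    obtain ⟨D, hD0, hD⟩ := key Finset.univ
    refine ⟨D, hD0, fun y => ?_⟩
    have : S y = ∑ k, y k • S (Pi.single k 1) := by
      conv_lhs => rw [pi_eq_sum_univ' y]
      simp only [map_sum, map_smul]
    rw [this]; exact hD y
  obtain ⟨C, hC0, hC⟩ := hB (ν / 2) (by positivity)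
  refine ⟨ν / 4, by positivity, (ν / 2 + C) * D + 1, by positivity, fun f => ?_⟩
  have e : (f - S (L f)) + S (L f) = f := by abel
  have h1 := hC (f - S (L f)) (S (L f))
  have h2 := hNadd (f - S (L f)) (S (L f))
  have h3 := hco (f - S (L f)) (by rw [map_sub, hS, sub_self])
  rw [e] at h1 h2
  have h4 := mul_le_mul_of_nonneg_left (hD (L f)) (show 0 ≤ ν / 2 + C by positivity)
  have h5 : 0 ≤ ∑ k, L f k ^ 2 := Finset.sum_nonneg fun _ _ => sq_nonneg _
  nlinarith [mul_le_mul_of_nonneg_left h2 hν.le]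

theorem aux_pd_add {d : ℕ} {f g : EuclideanSpace ℝ (Fin d) → ℝ} (hf : ContDiff ℝ 1 f)
    (hg : ContDiff ℝ 1 g) (i : Fin d) : pd (f + g) i = pd f i + pd g i := by
  ext x
  simp only [pd, Pi.add_apply]
  rw [fderiv_add (hf.differentiable (by simp) x) (hg.differentiable (by simp) x)]
  rfl

theorem aux_pd_smul {d : ℕ} {f : EuclideanSpace ℝ (Fin d) → ℝ} (hf : ContDiff ℝ 1 f)
    (c : ℝ) (i : Fin d) : pd (c • f) i = c • pd f i := by
  ext x
  simp only [pd, Pi.smul_apply]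
  rw [fderiv_const_smul (hf.differentiable (by simp) x) c]
  rfl

theorem aux_pd_cont {d : ℕ} {f : EuclideanSpace ℝ (Fin d) → ℝ} (hf : ContDiff ℝ 1 f)
    (i : Fin d) : Continuous (pd f i) := by
  have := hf.continuous_fderiv (by simp)
  unfold pd
  fun_prop

/-- The real `H¹` functions as a submodule. -/
def H1sub (d : ℕ) : Submodule ℝ (EuclideanSpace ℝ (Fin d) → ℝ) where
  carrier := {f | ContDiff ℝ 1 f ∧ MemLp f 2 volume ∧ ∀ i, MemLp (pd f i) 2 volume}
  add_mem' := by
    rintro f g ⟨h1, h2, h3⟩ ⟨k1, k2, k3⟩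
    refine ⟨h1.add k1, h2.add k2, fun i => ?_⟩
    rw [aux_pd_add h1 k1]; exact (h3 i).add (k3 i)
  zero_mem' := by
    refine ⟨contDiff_const, MemLp.zero, fun i => ?_⟩
    have : pd (0 : EuclideanSpace ℝ (Fin d) → ℝ) i = 0 := by ext x; simp [pd]
    rw [this]; exact MemLp.zero
  smul_mem' := by
    rintro c f ⟨h1, h2, h3⟩
    refine ⟨contDiff_const.smul h1, h2.const_smul c, fun i => ?_⟩
    rw [aux_pd_smul h1]; exact (h3 i).const_smul c

/-- real one-component norm square -/
def Nr {d : ℕ} (f : EuclideanSpace ℝ (Fin d) → ℝ) : ℝ :=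
  ∫ x : EuclideanSpace ℝ (Fin d), ((∑ i, pd f i x ^ 2) + f x ^ 2)

/-- one-component form with potential `V` -/
def Br {d : ℕ} (V f : EuclideanSpace ℝ (Fin d) → ℝ) : ℝ :=
  ∫ x : EuclideanSpace ℝ (Fin d), ((∑ i, pd f i x ^ 2) + f x ^ 2 - V x * f x ^ 2)

theorem Nr_int {d : ℕ} {f : EuclideanSpace ℝ (Fin d) → ℝ} (hf : f ∈ H1sub d) :
    Integrable (fun x : EuclideanSpace ℝ (Fin d) => (∑ i, pd f i x ^ 2) + f x ^ 2) :=
  (integrable_finsetSum _ fun i _ => (hf.2.2 i).integrable_sq).add hf.2.1.integrable_sq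

theorem Br_int {d : ℕ} {V f : EuclideanSpace ℝ (Fin d) → ℝ} (hf : f ∈ H1sub d)
    (hV : Continuous V) (M : ℝ) (hM : ∀ x, |V x| ≤ M) :
    Integrable (fun x : EuclideanSpace ℝ (Fin d) =>
      (∑ i, pd f i x ^ 2) + f x ^ 2 - V x * f x ^ 2) :=
  (Nr_int hf).sub (hf.2.1.integrable_sq.bdd_mul (c := M) hV.aestronglyMeasurable
    (Filter.Eventually.of_forall hM))

theorem Nr_nonneg {d : ℕ} (f : EuclideanSpace ℝ (Fin d) → ℝ) : 0 ≤ Nr f :=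
  integral_nonneg fun x => add_nonneg (Finset.sum_nonneg fun _ _ => sq_nonneg _) (sq_nonneg _)

theorem Nr_add {d : ℕ} {f g : EuclideanSpace ℝ (Fin d) → ℝ} (hf : f ∈ H1sub d)
    (hg : g ∈ H1sub d) : Nr (f + g) ≤ 2 * Nr f + 2 * Nr g := by
  unfold Nr
  rw [← integral_const_mul, ← integral_const_mul,
    ← integral_add ((Nr_int hf).const_mul 2) ((Nr_int hg).const_mul 2)]
  refine integral_mono (Nr_int (add_mem hf hg))
    (((Nr_int hf).const_mul 2).add ((Nr_int hg).const_mul 2)) fun x => ?_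
  simp only [aux_pd_add hf.1 hg.1, Pi.add_apply]
  have h1 : ∑ i, (pd f i x + pd g i x) ^ 2 ≤ 2 * ∑ i, pd f i x ^ 2 + 2 * ∑ i, pd g i x ^ 2 := by
    rw [Finset.mul_sum, Finset.mul_sum, ← Finset.sum_add_distrib]
    exact Finset.sum_le_sum fun i _ => by nlinarith [sq_nonneg (pd f i x - pd g i x)]
  nlinarith [sq_nonneg (f x - g x)]

theorem Nr_smul {d : ℕ} {f : EuclideanSpace ℝ (Fin d) → ℝ} (hf : f ∈ H1sub d) (c : ℝ) :
    Nr (c • f) = c ^ 2 * Nr f := by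
  unfold Nr
  rw [← integral_const_mul]
  congr 1; ext x
  simp only [aux_pd_smul hf.1, Pi.smul_apply, smul_eq_mul, mul_pow, ← Finset.mul_sum]
  ring

theorem aux_amgm (ε K a b : ℝ) (hε : 0 < ε) :
    2 * K * (a * b) ≤ ε * a ^ 2 + K ^ 2 / ε * b ^ 2 ∧
    -(ε * a ^ 2 + K ^ 2 / ε * b ^ 2) ≤ 2 * K * (a * b) := by
  have h : ε * a ^ 2 + K ^ 2 / ε * b ^ 2 - 2 * K * (a * b) = (ε * a - K * b) ^ 2 / ε := by
    field_simp; ring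
  have h' : ε * a ^ 2 + K ^ 2 / ε * b ^ 2 + 2 * K * (a * b) = (ε * a + K * b) ^ 2 / ε := by
    field_simp; ring
  have p1 : 0 ≤ (ε * a - K * b) ^ 2 / ε := by positivity
  have p2 : 0 ≤ (ε * a + K * b) ^ 2 / ε := by positivity
  constructor <;> linarith

theorem Br_add {d : ℕ} {V : EuclideanSpace ℝ (Fin d) → ℝ}
    (hV : Continuous V) (M : ℝ) (hM0 : 0 ≤ M) (hM : ∀ x, |V x| ≤ M) (ε : ℝ) (hε : 0 < ε)
    {g h : EuclideanSpace ℝ (Fin d) → ℝ} (hg : g ∈ H1sub d) (hh : h ∈ H1sub d) :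
    Br V g - ε * Nr g - ((1 + M) ^ 2 / ε + M) * Nr h ≤ Br V (g + h) := by
  unfold Br Nr
  have i1 := Br_int hg hV M hM
  have i2 := (Nr_int hg).const_mul ε
  have i3 := (Nr_int hh).const_mul ((1 + M) ^ 2 / ε + M)
  have i12 : Integrable (fun x : EuclideanSpace ℝ (Fin d) =>
      (∑ i, pd g i x ^ 2) + g x ^ 2 - V x * g x ^ 2 - ε * ((∑ i, pd g i x ^ 2) + g x ^ 2)) :=
    i1.sub i2
  rw [← integral_const_mul, ← integral_const_mul, ← integral_sub i1 i2,
    ← integral_sub i12 i3]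
  refine integral_mono (i12.sub i3) (Br_int (add_mem hg hh) hV M hM) fun x => ?_
  simp only [aux_pd_add hg.1 hh.1, Pi.add_apply]
  set C := (1 + M) ^ 2 / ε + M with hC
  have h1 : ∑ i, pd g i x ^ 2 - ε * ∑ i, pd g i x ^ 2 - C * ∑ i, pd h i x ^ 2
      ≤ ∑ i, (pd g i x + pd h i x) ^ 2 := by
    rw [Finset.mul_sum, Finset.mul_sum, ← Finset.sum_sub_distrib, ← Finset.sum_sub_distrib]
    refine Finset.sum_le_sum fun i _ => ?_
    have := (aux_amgm ε 1 (pd g i x) (pd h i x) hε).2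
    have h2 : (1 : ℝ) ^ 2 / ε ≤ C := by
      have : (1 : ℝ) ^ 2 / ε ≤ (1 + M) ^ 2 / ε := by gcongr; linarith
      linarith
    have h3 := mul_le_mul_of_nonneg_right h2 (sq_nonneg (pd h i x))
    nlinarith [sq_nonneg (pd h i x)]
  have h2 : g x ^ 2 - V x * g x ^ 2 - ε * g x ^ 2 - C * h x ^ 2
      ≤ (g x + h x) ^ 2 - V x * (g x + h x) ^ 2 := by
    obtain ⟨v1, v2⟩ := abs_le.1 (hM x)
    have h3 : -((1 + M) ^ 2 / ε) * h x ^ 2 - ε * g x ^ 2 ≤ 2 * (1 - V x) * (g x * h x) := by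
      have := (aux_amgm ε (1 - V x) (g x) (h x) hε).2
      have h4 : (1 - V x) ^ 2 / ε ≤ (1 + M) ^ 2 / ε := by
        gcongr ?_ / _
        exact sq_le_sq' (by linarith) (by linarith)
      have h5 := mul_le_mul_of_nonneg_right h4 (sq_nonneg (h x))
      linarith
    have h6 : V x * h x ^ 2 ≤ M * h x ^ 2 := mul_le_mul_of_nonneg_right v2 (sq_nonneg _)
    rw [hC]
    nlinarith [sq_nonneg (h x)]
  linarith

theorem isH1_iff {d : ℕ} (f₁ f₂ : EuclideanSpace ℝ (Fin d) → ℝ) :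
    IsH1 f₁ f₂ ↔ f₁ ∈ H1sub d ∧ f₂ ∈ H1sub d := by
  constructor
  · rintro ⟨c1, c2, h1, h2⟩
    have p1 := fun i => aux_pd_cont c1 i
    have p2 := fun i => aux_pd_cont c2 i
    have key : ∀ {u : EuclideanSpace ℝ (Fin d) → ℝ} {v : EuclideanSpace ℝ (Fin d) → ℝ},
        Integrable v → Continuous u → (∀ x, u x ^ 2 ≤ v x) → MemLp u 2 volume := by
      intro u v hv hu huv
      rw [memLp_two_iff_integrable_sq hu.aestronglyMeasurable]
      refine hv.mono' (hu.pow 2).aestronglyMeasurable (Filter.Eventually.of_forall fun x => ?_)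
      rw [Real.norm_of_nonneg (sq_nonneg _)]; exact huv x
    have ss : ∀ i x, pd f₁ i x ^ 2 + pd f₂ i x ^ 2 ≤ ∑ i, (pd f₁ i x ^ 2 + pd f₂ i x ^ 2) :=
      fun i x => Finset.single_le_sum (f := fun i => pd f₁ i x ^ 2 + pd f₂ i x ^ 2)
        (fun _ _ => by positivity) (Finset.mem_univ i)
    refine ⟨⟨c1, key h1 c1.continuous fun x => by nlinarith [sq_nonneg (f₂ x)],
      fun i => key h2 (p1 i) fun x => ?_⟩,
      ⟨c2, key h1 c2.continuous fun x => by nlinarith [sq_nonneg (f₁ x)],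
      fun i => key h2 (p2 i) fun x => ?_⟩⟩
    · linarith [ss i x, sq_nonneg (pd f₂ i x)]
    · linarith [ss i x, sq_nonneg (pd f₁ i x)]
  · rintro ⟨h1, h2⟩
    exact ⟨h1.1, h2.1, h1.2.1.integrable_sq.add h2.2.1.integrable_sq,
      integrable_finsetSum _ fun i _ => (h1.2.2 i).integrable_sq.add (h2.2.2 i).integrable_sq⟩

theorem H1normSq_eq {d : ℕ} {f₁ f₂ : EuclideanSpace ℝ (Fin d) → ℝ}
    (h1 : f₁ ∈ H1sub d) (h2 : f₂ ∈ H1sub d) : H1normSq f₁ f₂ = Nr f₁ + Nr f₂ := by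
  obtain ⟨-, -, i1, i2⟩ := (isH1_iff f₁ f₂).2 ⟨h1, h2⟩
  unfold H1normSq Nr
  rw [← integral_add i1 i2, ← integral_add (Nr_int h1) (Nr_int h2)]
  congr 1; ext x
  rw [Finset.sum_add_distrib]; ring

theorem aux_weight {d : ℕ} {w : EuclideanSpace ℝ (Fin d) → ℝ} (hw : Continuous w) (C δ : ℝ)
    (hδ : 0 < δ)
    (hb : ∀ x, |w x| ≤ C * ((1 + ‖x‖) ^ 2 * Real.exp (-δ * ‖x‖))) : MemLp w 2 volume := by
  rw [memLp_two_iff_integrable_sq hw.aestronglyMeasurable]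
  have hint : Integrable (fun x : EuclideanSpace ℝ (Fin d) => (1 + ‖x‖) ^ (-((d : ℝ) + 1))) :=
    integrable_one_add_norm (by simp)
  set n := d + 5 with hn
  set A := (n.factorial : ℝ) / (2 * δ) ^ n * Real.exp (2 * δ) with hA
  refine (hint.const_mul (C ^ 2 * A)).mono' (hw.pow 2).aestronglyMeasurable
    (Filter.Eventually.of_forall fun x => ?_)
  rw [Real.norm_of_nonneg (sq_nonneg _)]
  set t := ‖x‖ with ht
  have ht0 : 0 ≤ t := norm_nonneg x
  have h1 : w x ^ 2 ≤ (C * ((1 + t) ^ 2 * Real.exp (-δ * t))) ^ 2 := by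
    rw [← sq_abs (w x)]; exact pow_le_pow_left₀ (abs_nonneg _) (hb x) 2
  have h2 := Real.pow_div_factorial_le_exp (2 * δ * (1 + t)) (by positivity) n
  have h3 : (1 + t) ^ n * Real.exp (-δ * t) ^ 2 ≤ A := by
    have e1 : Real.exp (-δ * t) ^ 2 * Real.exp (2 * δ * (1 + t)) = Real.exp (2 * δ) := by
      rw [← Real.exp_nat_mul, ← Real.exp_add]; congr 1; push_cast; ring
    have f0 : (0 : ℝ) < n.factorial := by positivity
    rw [hA, ← e1, div_mul_eq_mul_div, le_div_iff₀ (by positivity)]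
    rw [div_le_iff₀ f0, mul_pow] at h2
    have := mul_le_mul_of_nonneg_right h2 (sq_nonneg (Real.exp (-δ * t)))
    linarith
  have e2 : (1 + t) ^ (-((d : ℝ) + 1)) = ((1 + t) ^ (d + 1))⁻¹ := by
    rw [Real.rpow_neg (by positivity)]; congr 1; exact_mod_cast Real.rpow_natCast (1 + t) (d + 1)
  rw [e2]
  refine h1.trans ?_
  rw [← div_eq_mul_inv, le_div_iff₀ (by positivity)]
  have e3 : (C * ((1 + t) ^ 2 * Real.exp (-δ * t))) ^ 2 * (1 + t) ^ (d + 1)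
      = C ^ 2 * ((1 + t) ^ n * Real.exp (-δ * t) ^ 2) := by
    rw [hn, show d + 5 = 4 + (d + 1) by ring, pow_add]; ring
  rw [e3]
  exact mul_le_mul_of_nonneg_left h3 (sq_nonneg _)

/-- The linear functional `f ↦ ∫ w f`. -/
def ell {d : ℕ} (w : EuclideanSpace ℝ (Fin d) → ℝ) (hw : MemLp w 2 volume) :
    H1sub d →ₗ[ℝ] ℝ where
  toFun f := ∫ x, w x * f.1 x
  map_add' f g := by
    have e1 : Integrable (fun x => w x * f.1 x) := hw.integrable_mul f.2.2.1
    have e2 : Integrable (fun x => w x * g.1 x) := hw.integrable_mul g.2.2.1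
    rw [← integral_add e1 e2]
    congr 1; ext x; simp [mul_add]
  map_smul' c f := by
    rw [RingHom.id_apply, smul_eq_mul, ← integral_const_mul]
    congr 1; ext x; simp; ring

theorem aux_main {d : ℕ} {ι κ : Type*} [Fintype ι] [Fintype κ] [DecidableEq ι] [DecidableEq κ]
    (V W : EuclideanSpace ℝ (Fin d) → ℝ) (hV : Continuous V) (hW : Continuous W)
    (M : ℝ) (hM0 : 0 ≤ M) (hVM : ∀ x, |V x| ≤ M) (hWM : ∀ x, |W x| ≤ M)
    (a : ι → EuclideanSpace ℝ (Fin d) → ℝ) (b : κ → EuclideanSpace ℝ (Fin d) → ℝ)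
    (ha : ∀ i, MemLp (a i) 2 volume) (hb : ∀ i, MemLp (b i) 2 volume)
    (ν : ℝ) (hν : 0 < ν)
    (hco : ∀ f₁ f₂ : EuclideanSpace ℝ (Fin d) → ℝ, IsH1 f₁ f₂ →
      (∀ i, ∫ x, a i x * f₁ x = 0) → (∀ i, ∫ x, b i x * f₂ x = 0) →
      ν * H1normSq f₁ f₂ ≤ Br V f₁ + Br W f₂) :
    ∃ ν₁ > (0 : ℝ), ∃ ν₂ > (0 : ℝ), ∀ f₁ f₂ : EuclideanSpace ℝ (Fin d) → ℝ,
      IsH1 f₁ f₂ →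
      ν₁ * H1normSq f₁ f₂ - ν₂ * ((∑ i, (∫ x, a i x * f₁ x) ^ 2) + ∑ i, (∫ x, b i x * f₂ x) ^ 2)
        ≤ Br V f₁ + Br W f₂ := by
  obtain ⟨ν₁, h1, ν₂, h2, h⟩ := aux_abstract (V := H1sub d × H1sub d) (ι := ι ⊕ κ)
    (fun f => Nr f.1.1 + Nr f.2.1) (fun f => Br V f.1.1 + Br W f.2.1)
    (fun f => add_nonneg (Nr_nonneg _) (Nr_nonneg _))
    (fun f g => by
      have e1 := Nr_add f.1.2 g.1.2
      have e2 := Nr_add f.2.2 g.2.2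
      simp only [Prod.fst_add, Prod.snd_add, Submodule.coe_add]
      linarith)
    (fun c f => by
      simp only [Prod.smul_fst, Prod.smul_snd, Submodule.coe_smul]
      rw [Nr_smul f.1.2, Nr_smul f.2.2]; ring)
    (fun ε hε => ⟨(1 + M) ^ 2 / ε + M, by positivity, fun g h => by
      have e1 := Br_add hV M hM0 hVM ε hε g.1.2 h.1.2
      have e2 := Br_add hW M hM0 hWM ε hε g.2.2 h.2.2
      simp only [Prod.fst_add, Prod.snd_add, Submodule.coe_add]
      linarith⟩)
    (LinearMap.pi (Sum.elim (fun i => (ell (a i) (ha i)).comp (LinearMap.fst ℝ _ _))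
      (fun i => (ell (b i) (hb i)).comp (LinearMap.snd ℝ _ _))))
    ν hν
    (fun f hf => by
      have e := hco f.1.1 f.2.1 ((isH1_iff _ _).2 ⟨f.1.2, f.2.2⟩)
        (fun i => congrFun hf (Sum.inl i)) (fun i => congrFun hf (Sum.inr i))
      rwa [H1normSq_eq f.1.2 f.2.2] at e)
  refine ⟨ν₁, h1, ν₂, h2, fun f₁ f₂ hf => ?_⟩
  obtain ⟨k1, k2⟩ := (isH1_iff _ _).1 hf
  have := h (⟨f₁, k1⟩, ⟨f₂, k2⟩)
  rw [Fintype.sum_sum_type] at this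
  rw [H1normSq_eq k1 k2]
  exact this

/-- the coercivity of `B` on `K` upgrades to a penalized coercivity on
every `H¹` function. -/
theorem coercivity_penalized (d : ℕ) (hd : 1 ≤ d)
    (Q : EuclideanSpace ℝ (Fin d) → ℝ)
    (hQsmooth : ContDiff ℝ (⊤ : ℕ∞) Q) (hQpos : ∀ x, 0 < Q x)
    (hQradial : ∀ x y : EuclideanSpace ℝ (Fin d), ‖x‖ = ‖y‖ → Q x = Q y)
    (hQsol : ∀ x, lap Q x - Q x + Q x ^ ((1 : ℝ) + 4 / d) = 0)
    (C₀ δ₀ : ℝ) (hC₀ : 0 < C₀) (hδ₀ : 0 < δ₀)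
    (hQdecay : ∀ x : EuclideanSpace ℝ (Fin d),
      |Q x| ≤ C₀ * Real.exp (-δ₀ * ‖x‖) ∧
      (∀ i, |pd Q i x| ≤ C₀ * Real.exp (-δ₀ * ‖x‖)) ∧
      (∀ i j, |pd (pd Q i) j x| ≤ C₀ * Real.exp (-δ₀ * ‖x‖)))
    (ρ : EuclideanSpace ℝ (Fin d) → ℝ)
    (hρsmooth : ContDiff ℝ 2 ρ)
    (hρradial : ∀ x y : EuclideanSpace ℝ (Fin d), ‖x‖ = ‖y‖ → ρ x = ρ y)
    (hρeq : ∀ x, -lap ρ x + ρ x - (1 + 4 / (d : ℝ)) * Q x ^ ((4 : ℝ) / d) * ρ x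
      = -(‖x‖ ^ 2 * Q x))
    (hρdecay : ∀ x : EuclideanSpace ℝ (Fin d),
      |ρ x| + Real.sqrt (∑ i, pd ρ i x ^ 2) ≤ C₀ * Real.exp (-δ₀ * ‖x‖))
    (hcoer : ∃ ν > (0 : ℝ), ∀ f₁ f₂ : EuclideanSpace ℝ (Fin d) → ℝ,
      IsH1 f₁ f₂ → InKset Q ρ f₁ f₂ → Bform Q f₁ f₂ ≥ ν * H1normSq f₁ f₂) :
    ∃ ν₁ > (0 : ℝ), ∃ ν₂ > (0 : ℝ), ∀ f₁ f₂ : EuclideanSpace ℝ (Fin d) → ℝ,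
      IsH1 f₁ f₂ →
      Bform Q f₁ f₂ ≥ ν₁ * H1normSq f₁ f₂
        - ν₂ * ((∫ x : EuclideanSpace ℝ (Fin d), Q x * f₁ x) ^ 2
          + (∑ j, (∫ x : EuclideanSpace ℝ (Fin d), x j * Q x * f₁ x) ^ 2)
          + (∫ x : EuclideanSpace ℝ (Fin d), ‖x‖ ^ 2 * Q x * f₁ x) ^ 2
          + (∑ j, (∫ x : EuclideanSpace ℝ (Fin d), pd Q j x * f₂ x) ^ 2)
          + (∫ x : EuclideanSpace ℝ (Fin d),
              ((d : ℝ) / 2 * Q x + ∑ i, x i * pd Q i x) * f₂ x) ^ 2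
          + (∫ x : EuclideanSpace ℝ (Fin d), ρ x * f₂ x) ^ 2) := by
  obtain ⟨ν, hν, hcoer⟩ := hcoer
  have hQ1 : ContDiff ℝ 1 Q := hQsmooth.of_le (by exact_mod_cast le_top)
  have hQc : Continuous Q := hQ1.continuous
  have hpc := fun i => aux_pd_cont hQ1 i
  have hρc : Continuous ρ := hρsmooth.continuous
  have hd0 : (0 : ℝ) < d := by exact_mod_cast hd
  have hPc : Continuous fun x => Q x ^ ((4 : ℝ) / d) :=
    hQc.rpow_const fun x => Or.inl (hQpos x).ne'
  have hP0 : ∀ x, 0 ≤ Q x ^ ((4 : ℝ) / d) := fun x => Real.rpow_nonneg (hQpos x).le _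
  have hP : ∀ x, Q x ^ ((4 : ℝ) / d) ≤ C₀ ^ ((4 : ℝ) / d) := fun x => by
    refine Real.rpow_le_rpow (hQpos x).le ?_ (by positivity)
    refine (le_abs_self _).trans ((hQdecay x).1.trans ?_)
    have : Real.exp (-δ₀ * ‖x‖) ≤ 1 := Real.exp_le_one_iff.2 (by nlinarith [norm_nonneg x])
    nlinarith
  have hM0 : 0 ≤ C₀ ^ ((4 : ℝ) / d) := Real.rpow_nonneg hC₀.le _
  -- elementary bounds for weights
  have hE : ∀ x : EuclideanSpace ℝ (Fin d), 0 ≤ C₀ * Real.exp (-δ₀ * ‖x‖) :=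
    fun x => by positivity
  have hw : ∀ (w p q : EuclideanSpace ℝ (Fin d) → ℝ), Continuous w → (∀ x, w x = p x * q x) →
      (∀ x, |p x| ≤ (1 + ‖x‖) ^ 2) → (∀ x, |q x| ≤ C₀ * Real.exp (-δ₀ * ‖x‖)) →
      MemLp w 2 volume := by
    intro w p q hwc hwe hp hq
    refine aux_weight hwc C₀ δ₀ hδ₀ fun x => ?_
    rw [hwe, abs_mul]
    calc |p x| * |q x| ≤ (1 + ‖x‖) ^ 2 * (C₀ * Real.exp (-δ₀ * ‖x‖)) :=
          mul_le_mul (hp x) (hq x) (abs_nonneg _) (by positivity)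
      _ = _ := by ring
  have hone : ∀ x : EuclideanSpace ℝ (Fin d), |(1 : ℝ)| ≤ (1 + ‖x‖) ^ 2 := fun x => by
    rw [abs_one]; nlinarith [norm_nonneg x]
  have hcoord : ∀ j, ∀ x : EuclideanSpace ℝ (Fin d), |x j| ≤ (1 + ‖x‖) ^ 2 := fun j x => by
    have := PiLp.norm_apply_le x j
    rw [Real.norm_eq_abs] at this
    nlinarith [norm_nonneg x]
  have hcc : ∀ j, Continuous fun x : EuclideanSpace ℝ (Fin d) => x j := fun j => by fun_prop
  have m1 : MemLp Q 2 volume := hw Q (fun _ => 1) Q hQc (fun x => by ring) hone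
    fun x => (hQdecay x).1
  have m2 : ∀ j, MemLp (fun x : EuclideanSpace ℝ (Fin d) => x j * Q x) 2 volume := fun j =>
    hw _ (fun x => x j) Q ((hcc j).mul hQc) (fun x => rfl) (hcoord j) fun x => (hQdecay x).1
  have m3 : MemLp (fun x : EuclideanSpace ℝ (Fin d) => ‖x‖ ^ 2 * Q x) 2 volume :=
    hw _ (fun x => ‖x‖ ^ 2) Q (by fun_prop) (fun x => rfl)
      (fun x => by rw [abs_of_nonneg (by positivity)]; nlinarith [norm_nonneg x])
      fun x => (hQdecay x).1
  have m4 : ∀ j, MemLp (pd Q j) 2 volume := fun j =>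
    hw _ (fun _ => 1) (pd Q j) (hpc j) (fun x => by ring) hone fun x => (hQdecay x).2.1 j
  have m5 : MemLp (fun x : EuclideanSpace ℝ (Fin d) =>
      (d : ℝ) / 2 * Q x + ∑ i, x i * pd Q i x) 2 volume :=
    (m1.const_mul _).add (memLp_finsetSum _ fun i _ =>
      hw _ (fun x => x i) (pd Q i) ((hcc i).mul (hpc i)) (fun x => rfl) (hcoord i)
        fun x => (hQdecay x).2.1 i)
  have m6 : MemLp ρ 2 volume := hw ρ (fun _ => 1) ρ hρc (fun x => by ring) hone
    fun x => by linarith [hρdecay x, Real.sqrt_nonneg (∑ i, pd ρ i x ^ 2)]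
  obtain ⟨ν₁, h1, ν₂, h2, h⟩ := aux_main (d := d) (ι := Option (Option (Fin d)))
    (κ := Option (Option (Fin d)))
    (fun x => (1 + 4 / (d : ℝ)) * Q x ^ ((4 : ℝ) / d)) (fun x => Q x ^ ((4 : ℝ) / d))
    (continuous_const.mul hPc) hPc ((1 + 4 / (d : ℝ)) * C₀ ^ ((4 : ℝ) / d)) (by positivity)
    (fun x => by
      rw [abs_of_nonneg (mul_nonneg (by positivity) (hP0 x))]
      exact mul_le_mul_of_nonneg_left (hP x) (by positivity))
    (fun x => by
      rw [abs_of_nonneg (hP0 x)]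
      have : 0 ≤ 4 / (d : ℝ) := by positivity
      nlinarith [hP x])
    (fun o => match o with
      | none => Q
      | some none => fun x => ‖x‖ ^ 2 * Q x
      | some (some j) => fun x => x j * Q x)
    (fun o => match o with
      | none => ρ
      | some none => fun x => (d : ℝ) / 2 * Q x + ∑ i, x i * pd Q i x
      | some (some j) => pd Q j)
    (fun o => match o with
      | none => m1
      | some none => m3
      | some (some j) => m2 j)
    (fun o => match o with
      | none => m6
      | some none => m5
      | some (some j) => m4 j)
    ν hν
    (fun f₁ f₂ hf ha hb => hcoer f₁ f₂ hf
      ⟨ha none, fun j => ha (some (some j)), ha (some none), fun j => hb (some (some j)),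
        hb (some none), hb none⟩)
  refine ⟨ν₁, h1, ν₂, h2, fun f₁ f₂ hf => ?_⟩
  have := h f₁ f₂ hf
  simp only [Fintype.sum_option] at this
  refine ge_iff_le.2 (le_trans (le_of_eq ?_) this)
  ring
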